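/- Let d ∈ (−1, 0), b⁺, b⁻ ∈ ℝ and t ∈ ℝ. Define f : ℝ → ℝ by f(x) = b⁺((t−x)₊^d − (−x)₊^d) + b⁻((t−x)₋^d − (−x)₋^d). Then f ∈ L¹(ℝ), and for every ξ ≠ 0 its Fourier transform f̂(ξ) = ∫_ℝ f(x) e^{−iξx} dx equals Γ(d+1) · ((e^{−iξt} − 1)/|ξ|^{d+1}) · [ b⁺ exp( (iπ/2) sgn(ξ) (d+1) ) + b⁻ exp( −(iπ/2) sgn(ξ) (d+1) ) ]. -/

import Mathlib

open MeasureTheory Filter Topology Set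

noncomputable def posPow (x d : ℝ) : ℝ := if 0 < x then x ^ d else 0
noncomputable def negPow (x d : ℝ) : ℝ := if x < 0 then (-x) ^ d else 0

lemma norm_kernel {s : ℝ} {w : ℂ} {u : ℝ} (hu : 0 < u) :
    ‖((u ^ s : ℝ) : ℂ) * Complex.exp (-(w * u))‖ = u ^ s * Real.exp (-w.re * u) := by
  rw [norm_mul, Complex.norm_exp, Complex.norm_real, Real.norm_of_nonneg (by positivity)]
  simp

lemma real_kernel_int {s b : ℝ} (hs : -1 < s) (hb : 0 < b) :
    IntegrableOn (fun u : ℝ => u ^ s * Real.exp (-b * u)) (Ioi 0) := by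
  simpa using integrableOn_rpow_mul_exp_neg_mul_rpow (p := 1) hs one_pos hb

lemma kernel_meas (s : ℝ) (w : ℂ) :
    AEStronglyMeasurable (fun u : ℝ => ((u ^ s : ℝ) : ℂ) * Complex.exp (-(w * u)))
      (volume.restrict (Ioi 0)) := by
  apply Measurable.aestronglyMeasurable
  fun_prop

lemma kernel_int {s : ℝ} (hs : -1 < s) {w : ℂ} (hw : 0 < w.re) :
    IntegrableOn (fun u : ℝ => ((u ^ s : ℝ) : ℂ) * Complex.exp (-(w * u))) (Ioi 0) := by
  refine Integrable.mono' (real_kernel_int hs hw) (kernel_meas s w) ?_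
  refine (ae_restrict_iff' measurableSet_Ioi).2 (Eventually.of_forall fun u hu => ?_)
  exact (norm_kernel hu).le

lemma kernel_diff {s : ℝ} (hs : -1 < s) {w : ℂ} (hw : 0 < w.re) :
    DifferentiableAt ℂ (fun z : ℂ => ∫ u in Ioi (0:ℝ), ((u ^ s : ℝ) : ℂ) * Complex.exp (-(z * u))) w := by
  have h := hasDerivAt_integral_of_dominated_loc_of_deriv_le (𝕜 := ℂ) (μ := volume.restrict (Ioi (0:ℝ)))
    (F := fun z u => ((u ^ s : ℝ) : ℂ) * Complex.exp (-(z * u)))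
    (F' := fun z u => ((u ^ s : ℝ) : ℂ) * (Complex.exp (-(z * u)) * (-u)))
    (x₀ := w) (s := Metric.ball w (w.re / 2))
    (bound := fun u => u ^ (s + 1) * Real.exp (-(w.re / 2) * u))
    (Metric.ball_mem_nhds _ (by positivity))
    (Eventually.of_forall fun z => kernel_meas s z)
    (kernel_int hs hw) (Measurable.aestronglyMeasurable (by fun_prop)) ?_
    (real_kernel_int (by linarith) (by positivity)) ?_
  · exact h.2.differentiableAt
  · refine (ae_restrict_iff' measurableSet_Ioi).2 (Eventually.of_forall fun u hu z hz => ?_)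
    have hu' : 0 < u := hu
    rw [← mul_assoc, norm_mul, norm_kernel hu, norm_neg, Complex.norm_real, Real.norm_of_nonneg hu'.le,
      Real.rpow_add_one hu'.ne']
    have h1 : w.re / 2 ≤ z.re := by
      have := Complex.abs_re_le_norm (z - w)
      rw [Metric.mem_ball, dist_eq_norm] at hz
      have := (abs_le.1 (this.trans hz.le)).1
      simp at this; linarith
    have h2 : Real.exp (-z.re * u) ≤ Real.exp (-(w.re / 2) * u) := by
      apply Real.exp_le_exp.2
      nlinarith
    calc u ^ s * Real.exp (-z.re * u) * u = u ^ s * u * Real.exp (-z.re * u) := by ring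
      _ ≤ _ := by gcongr
  · refine Eventually.of_forall fun u z hz => ?_
    have : HasDerivAt (fun z : ℂ => -(z * u)) (-u) z := by
      have h0 := ((hasDerivAt_id z).mul_const (u : ℂ)).fun_neg
      rw [one_mul] at h0
      exact h0
    exact (this.cexp).const_mul _

lemma kernel_eq {s : ℝ} (hs : -1 < s) {w : ℂ} (hw : 0 < w.re) :
    ∫ u in Ioi (0:ℝ), ((u ^ s : ℝ) : ℂ) * Complex.exp (-(w * u))
      = (Real.Gamma (s + 1) : ℂ) * w ^ (-((s : ℂ) + 1)) := by
  have hU : IsOpen {z : ℂ | 0 < z.re} := isOpen_lt continuous_const Complex.continuous_re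
  have hf : AnalyticOnNhd ℂ (fun z : ℂ => ∫ u in Ioi (0:ℝ), ((u ^ s : ℝ) : ℂ) * Complex.exp (-(z * u)))
      {z : ℂ | 0 < z.re} :=
    DifferentiableOn.analyticOnNhd (fun z hz => (kernel_diff hs hz).differentiableWithinAt) hU
  have hg : AnalyticOnNhd ℂ (fun z : ℂ => (Real.Gamma (s + 1) : ℂ) * z ^ (-((s : ℂ) + 1)))
      {z : ℂ | 0 < z.re} := by
    refine DifferentiableOn.analyticOnNhd (fun z hz => ?_) hU
    refine DifferentiableAt.differentiableWithinAt ?_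
    refine DifferentiableAt.const_mul ?_ _
    exact (differentiableAt_id).cpow_const (Or.inl hz)
  have hc : IsPreconnected {z : ℂ | 0 < z.re} := (convex_halfSpace_re_gt 0).isPreconnected
  refine hf.eqOn_of_preconnected_of_frequently_eq hg hc (z₀ := 1) (by simp) ?_ hw
  have hreal : ∀ r : ℝ, 0 < r → ∫ u in Ioi (0:ℝ), ((u ^ s : ℝ) : ℂ) * Complex.exp (-((r:ℂ) * u))
      = (Real.Gamma (s + 1) : ℂ) * (r:ℂ) ^ (-((s : ℂ) + 1)) := by
    intro r hr
    have := Complex.integral_cpow_mul_exp_neg_mul_Ioi (a := (s:ℂ) + 1) (r := r) (by simp; linarith) hr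
    rw [Complex.cpow_neg, ← Complex.Gamma_ofReal]
    push_cast
    rw [one_div, Complex.inv_cpow _ _ (by rw [Complex.arg_ofReal_of_nonneg hr.le]; exact Real.pi_pos.ne), mul_comm] at this
    rw [← this]
    refine setIntegral_congr_fun measurableSet_Ioi fun u hu => ?_
    rw [Complex.ofReal_cpow (le_of_lt hu)]
    simp
  have ht : Tendsto (fun n : ℕ => (((1 + 1 / ((n:ℝ) + 1) : ℝ)) : ℂ)) atTop (𝓝[≠] 1) := by
    refine tendsto_nhdsWithin_iff.2 ⟨?_, Eventually.of_forall fun n => ?_⟩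
    · have : Tendsto (fun n : ℕ => (1 + 1 / ((n:ℝ) + 1) : ℝ)) atTop (𝓝 (1 + 0)) :=
        tendsto_const_nhds.add tendsto_one_div_add_atTop_nhds_zero_nat
      rw [add_zero] at this
      exact (Complex.continuous_ofReal.tendsto _).comp this
    · have : (0:ℝ) < 1 / ((n:ℝ) + 1) := by positivity
      intro h
      have h' : (1 + 1 / ((n:ℝ) + 1) : ℝ) = 1 := by
        have h'' : ((1 + 1 / ((n:ℝ) + 1) : ℝ) : ℂ) = ((1 : ℝ) : ℂ) := by simpa using h
        exact Complex.ofReal_injective h''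
      linarith
  refine ht.frequently (Eventually.frequently (Eventually.of_forall fun n => ?_))
  exact hreal _ (by positivity)

/-- integrability -/
lemma posPow_meas (d : ℝ) : Measurable (fun u => posPow u d) := by
  unfold posPow
  exact Measurable.ite measurableSet_Ioi (by fun_prop) measurable_const

lemma posPow_intOn {d : ℝ} (hd : -1 < d) (a b : ℝ) : IntegrableOn (fun u => posPow u d) (Ioc a b) := by
  have h : IntegrableOn (fun u : ℝ => u ^ d) (Ioc a b) := by
    rcases le_total a b with hab | hab
    · exact (intervalIntegrable_iff_integrableOn_Ioc_of_le hab).1 (intervalIntegral.intervalIntegrable_rpow' hd)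
    · simp [Ioc_eq_empty_of_le hab]
  refine Integrable.mono h (posPow_meas d).aestronglyMeasurable (Eventually.of_forall fun u => ?_)
  unfold posPow
  split_ifs <;> simp

lemma diff_bound {d : ℝ} (h1 : -1 < d) (h2 : d < 0) {t u : ℝ} (ht : 0 ≤ t) (hu : 0 < u) :
    |(u + t) ^ d - u ^ d| ≤ t * u ^ (d - 1) := by
  have h3 : (u + t) ^ d ≤ u ^ d := Real.rpow_le_rpow_of_nonpos hu (by linarith) h2.le
  rw [abs_sub_comm, abs_of_nonneg (by linarith)]
  have e : (u + t) = u * (1 + t / u) := by field_simp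
  have hx : 0 ≤ t / u := by positivity
  have h4 : (1 + t / u) ^ (-1 : ℝ) ≤ (1 + t / u) ^ d :=
    Real.rpow_le_rpow_of_exponent_le (by linarith) h1.le
  rw [Real.rpow_neg_one] at h4
  have h5 : 1 - t / u ≤ (1 + t / u)⁻¹ := by
    rw [← one_div, le_div_iff₀ (by linarith)]; nlinarith
  rw [e, Real.mul_rpow hu.le (by linarith), Real.rpow_sub_one hu.ne']
  have h6 : 0 ≤ u ^ d := by positivity
  have : t * (u ^ d / u) = u ^ d * (t / u) := by ring
  rw [this]
  nlinarith

lemma diff_int_pos {d : ℝ} (h1 : -1 < d) (h2 : d < 0) {t : ℝ} (ht : 0 ≤ t) :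
    Integrable (fun u => posPow (u + t) d - posPow u d) := by
  have hm : Measurable (fun u => posPow (u + t) d - posPow u d) :=
    ((posPow_meas d).comp (measurable_id.add_const t)).sub (posPow_meas d)
  have hA : IntegrableOn (fun u => posPow (u + t) d - posPow u d) (Iic (-t)) := by
    refine IntegrableOn.congr_fun (f := fun _ => (0:ℝ)) integrableOn_zero (fun u hu => ?_) measurableSet_Iic
    have : u ≤ -t := hu
    simp [posPow, show ¬ 0 < u + t by linarith, show ¬ 0 < u by linarith]
  have hB : IntegrableOn (fun u => posPow (u + t) d - posPow u d) (Ioc (-t) 1) := by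
    refine Integrable.sub ?_ (posPow_intOn h1 _ _)
    have := ((measurePreserving_add_right volume t).integrableOn_comp_preimage
      (Homeomorph.addRight t).measurableEmbedding).2 (posPow_intOn h1 0 (1 + t))
    have h' : IntegrableOn (fun u => posPow (u + t) d) (Ioc (-t) 1) := by
      simpa [Function.comp_def] using this
    exact h'
  have hC : IntegrableOn (fun u => posPow (u + t) d - posPow u d) (Ioi 1) := by
    refine Integrable.mono' (((integrableOn_Ioi_rpow_of_lt (a := d - 1) (by linarith) one_pos)).const_mul t)
      hm.aestronglyMeasurable ?_
    refine (ae_restrict_iff' measurableSet_Ioi).2 (Eventually.of_forall fun u hu => ?_)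
    have hu : 1 < u := hu
    have h0 : 0 < u := by linarith
    have h0' : 0 < u + t := by linarith
    simpa [posPow, h0, h0'] using diff_bound h1 h2 ht h0
  rw [← integrableOn_univ]
  have := (hA.union hB).union hC
  refine this.mono_set fun u _ => ?_
  simp only [mem_union, mem_Iic, mem_Ioc, mem_Ioi]
  by_cases hh : u ≤ -t <;> by_cases h' : u ≤ 1 <;> simp [hh, h', not_le.1] <;> grind

lemma diff_int {d : ℝ} (h1 : -1 < d) (h2 : d < 0) (t : ℝ) :
    Integrable (fun u => posPow (u + t) d - posPow u d) := by
  rcases le_total 0 t with ht | ht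
  · exact diff_int_pos h1 h2 ht
  · have := ((diff_int_pos h1 h2 (t := -t) (by linarith)).comp_add_right t).neg
    refine this.congr (Eventually.of_forall fun u => ?_)
    simp

lemma diff_int' {d : ℝ} (h1 : -1 < d) (h2 : d < 0) (t : ℝ) :
    Integrable (fun x => posPow (t - x) d - posPow (-x) d) := by
  have := (diff_int h1 h2 t).comp_neg
  refine this.congr (Eventually.of_forall fun u => ?_)
  simp [neg_add_eq_sub]

/-- regularised integral -/
lemma ft_kernel {s : ℝ} (hs : -1 < s) {w : ℂ} (hw : 0 < w.re) (t : ℝ) :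
    Integrable (fun x : ℝ => (posPow (t - x) s : ℂ) * Complex.exp (w * x)) ∧
    ∫ x : ℝ, (posPow (t - x) s : ℂ) * Complex.exp (w * x)
      = Complex.exp (w * t) * ((Real.Gamma (s + 1) : ℂ) * w ^ (-((s : ℂ) + 1))) := by
  have hind : (fun u : ℝ => Complex.exp (w * t) * ((posPow u s : ℂ) * Complex.exp (-(w * u))))
      = (Ioi (0:ℝ)).indicator (fun u : ℝ => Complex.exp (w * t) * (((u ^ s : ℝ) : ℂ) * Complex.exp (-(w * u)))) := by
    ext u
    by_cases hu : 0 < u <;> simp [posPow, hu]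
  have hcomp : (fun x : ℝ => (posPow (t - x) s : ℂ) * Complex.exp (w * x))
      = fun x => (fun u : ℝ => Complex.exp (w * t) * ((posPow u s : ℂ) * Complex.exp (-(w * u)))) (t - x) := by
    ext x
    simp only
    rw [mul_left_comm, ← Complex.exp_add]
    congr 2
    push_cast; ring
  rw [hcomp]
  refine ⟨Integrable.comp_sub_left (f := fun u : ℝ => Complex.exp (w * t) * ((posPow u s : ℂ) * Complex.exp (-(w * u)))) ?_ t, ?_⟩
  · rw [hind, integrable_indicator_iff measurableSet_Ioi]
    exact (kernel_int hs hw).const_mul _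
  · rw [integral_sub_left_eq_self (fun u : ℝ => Complex.exp (w * t) * ((posPow u s : ℂ) * Complex.exp (-(w * u)))) volume t,
      hind, integral_indicator measurableSet_Ioi, integral_const_mul, kernel_eq hs hw]

lemma ft_diff {d : ℝ} (h1 : -1 < d) (h2 : d < 0) (t : ℝ) {ξ : ℝ} (hξ : ξ ≠ 0) :
    ∫ x : ℝ, ((posPow (t - x) d - posPow (-x) d : ℝ) : ℂ) * Complex.exp (-(Complex.I * ξ * x))
     = (Complex.exp (-(Complex.I * ξ * t)) - 1) *
        ((Real.Gamma (d + 1) : ℂ) * (-(Complex.I * ξ)) ^ (-((d : ℂ) + 1))) := by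
  have hI := diff_int' h1 h2 t
  have hm := hI.aestronglyMeasurable
  have hL : Tendsto (fun e : ℝ => ∫ x : ℝ, ((posPow (t - x) d - posPow (-x) d : ℝ) : ℂ) *
      Complex.exp ((e - Complex.I * ξ) * x)) (𝓝[>] 0) (𝓝 (∫ x : ℝ,
      ((posPow (t - x) d - posPow (-x) d : ℝ) : ℂ) * Complex.exp (-(Complex.I * ξ * x)))) := by
    refine tendsto_integral_filter_of_dominated_convergence
      (fun x => ‖posPow (t - x) d - posPow (-x) d‖ * Real.exp |t|) ?_ ?_ (hI.norm.mul_const _) ?_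
    · refine Eventually.of_forall fun e => ?_
      exact (Complex.continuous_ofReal.comp_aestronglyMeasurable hm).mul
        (Measurable.aestronglyMeasurable (by fun_prop))
    · filter_upwards [Ioo_mem_nhdsGT (show (0:ℝ) < 1 by norm_num)] with e he
      refine Eventually.of_forall fun x => ?_
      rw [norm_mul, Complex.norm_real, Complex.norm_exp]
      by_cases hx : x ≤ |t|
      · gcongr
        have : (((e:ℂ) - Complex.I * ξ) * x).re = e * x := by simp
        rw [this]
        have := abs_nonneg t
        have := he.1
        have := he.2
        nlinarith
      · have a1 : ¬ 0 < t - x := by have := le_abs_self t; linarith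
        have a2 : ¬ 0 < -x := by have := abs_nonneg t; linarith
        simp [posPow, a1, a2]
    · refine Eventually.of_forall fun x => ?_
      refine tendsto_nhdsWithin_of_tendsto_nhds ?_
      have : Continuous (fun e : ℝ => ((posPow (t - x) d - posPow (-x) d : ℝ) : ℂ) *
        Complex.exp ((e - Complex.I * ξ) * x)) := by fun_prop
      simpa using this.tendsto 0
  have hR : Tendsto (fun e : ℝ => (Complex.exp ((e - Complex.I * ξ) * t) - 1) *
        ((Real.Gamma (d + 1) : ℂ) * (e - Complex.I * ξ) ^ (-((d : ℂ) + 1)))) (𝓝[>] 0)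
        (𝓝 ((Complex.exp (-(Complex.I * ξ * t)) - 1) *
        ((Real.Gamma (d + 1) : ℂ) * (-(Complex.I * ξ)) ^ (-((d : ℂ) + 1))))) := by
    refine tendsto_nhdsWithin_of_tendsto_nhds ?_
    have : ContinuousAt (fun e : ℝ => (Complex.exp ((e - Complex.I * ξ) * t) - 1) *
        ((Real.Gamma (d + 1) : ℂ) * (e - Complex.I * ξ) ^ (-((d : ℂ) + 1)))) 0 := by
      refine ContinuousAt.mul (by fun_prop) (continuousAt_const.mul ?_)
      refine ContinuousAt.cpow (by fun_prop) continuousAt_const ?_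
      right; simpa using hξ
    simpa [ContinuousAt] using this
  refine tendsto_nhds_unique hL (hR.congr' ?_)
  filter_upwards [self_mem_nhdsWithin] with e he
  have hw : 0 < ((e:ℂ) - Complex.I * ξ).re := by simpa using he
  have k1 := ft_kernel h1 hw t
  have k0 := ft_kernel h1 hw 0
  simp only [zero_sub] at k0
  rw [sub_mul, ← k1.2, one_mul]
  have : ((Real.Gamma (d + 1) : ℂ) * (e - Complex.I * ξ) ^ (-((d : ℂ) + 1))) =
    ∫ x : ℝ, (posPow (-x) d : ℂ) * Complex.exp ((e - Complex.I * ξ) * x) := by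
    rw [k0.2]; simp
  rw [this, ← integral_sub k1.1 k0.1]
  congr 1
  ext x
  push_cast; ring

lemma cpow_val (d : ℝ) {ξ : ℝ} (hξ : ξ ≠ 0) :
    (-(Complex.I * ξ)) ^ (-((d : ℂ) + 1)) =
      Complex.exp ((Real.pi : ℂ) * Complex.I / 2 * (Real.sign ξ : ℝ) * (d + 1)) /
        ((|ξ| ^ (d + 1) : ℝ) : ℂ) := by
  have hp : 0 < |ξ| := abs_pos.2 hξ
  have hlog : Complex.log (-(Complex.I * ξ)) = Real.log |ξ| - (Real.pi : ℂ) * Complex.I / 2 * (Real.sign ξ : ℝ) := by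
    rcases lt_or_gt_of_ne hξ with h | h
    · have : -(Complex.I * ξ) = ((|ξ| : ℝ) : ℂ) * Complex.I := by
        rw [abs_of_neg h]; push_cast; ring
      rw [this, Complex.log_ofReal_mul hp Complex.I_ne_zero, Complex.log_I, Real.sign_of_neg h]
      push_cast; ring
    · have : -(Complex.I * ξ) = ((|ξ| : ℝ) : ℂ) * (-Complex.I) := by
        rw [abs_of_pos h]; push_cast; ring
      rw [this, Complex.log_ofReal_mul hp (by simp), Complex.log_neg_I, Real.sign_of_pos h]
      push_cast; ring
  rw [Complex.cpow_def_of_ne_zero (by simpa using hξ), hlog, Real.rpow_def_of_pos hp]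
  push_cast
  rw [← Complex.exp_sub]
  congr 1
  ring

/-- Fourier transform of the linear fractional stable motion kernel. -/
theorem stmt_9 (d : ℝ) (hd1 : -1 < d) (hd2 : d < 0) (bp bm t : ℝ)
    (f : ℝ → ℝ)
    (hf : ∀ x : ℝ, f x = bp * (posPow (t - x) d - posPow (-x) d)
        + bm * (negPow (t - x) d - negPow (-x) d)) :
    Integrable f ∧
      ∀ ξ : ℝ, ξ ≠ 0 →
        (∫ x : ℝ, (f x : ℂ) * Complex.exp (-(Complex.I * ξ * x))) =
          (Real.Gamma (d + 1) : ℂ) *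
            ((Complex.exp (-(Complex.I * ξ * t)) - 1) / ((|ξ| ^ (d + 1) : ℝ) : ℂ)) *
            ((bp : ℂ) * Complex.exp ((Real.pi : ℂ) * Complex.I / 2 * (Real.sign ξ : ℝ) * (d + 1)) +
             (bm : ℂ) * Complex.exp (-((Real.pi : ℂ) * Complex.I / 2 * (Real.sign ξ : ℝ) * (d + 1)))) := by
  have hneg : ∀ x, negPow x d = posPow (-x) d := by
    intro x; simp [negPow, posPow]
  have hI1 := diff_int' hd1 hd2 t
  have hI2 : Integrable (fun x => negPow (t - x) d - negPow (-x) d) := by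
    refine (diff_int' hd1 hd2 (-t)).comp_neg.congr (Eventually.of_forall fun x => ?_)
    simp [hneg, neg_add_eq_sub]
  have hfe : f = fun x => bp * (posPow (t - x) d - posPow (-x) d)
        + bm * (negPow (t - x) d - negPow (-x) d) := funext hf
  refine ⟨hfe ▸ (hI1.const_mul bp).add (hI2.const_mul bm), fun ξ hξ => ?_⟩
  have hbd : ∀ g : ℝ → ℝ, Integrable g → Integrable (fun x : ℝ => (g x : ℂ) * Complex.exp (-(Complex.I * ξ * x))) := by
    intro g hg
    refine Integrable.mono hg (((Complex.continuous_ofReal.comp_aestronglyMeasurable hg.1)).mul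
        (Measurable.aestronglyMeasurable (by fun_prop))) (Eventually.of_forall fun x => ?_)
    rw [norm_mul, Complex.norm_exp]
    simp
  have e1 := ft_diff hd1 hd2 t hξ
  have e2 : ∫ x : ℝ, ((negPow (t - x) d - negPow (-x) d : ℝ) : ℂ) * Complex.exp (-(Complex.I * ξ * x))
     = (Complex.exp (-(Complex.I * ξ * t)) - 1) *
        ((Real.Gamma (d + 1) : ℂ) * (-(Complex.I * (-ξ : ℝ))) ^ (-((d : ℂ) + 1))) := by
    have := ft_diff hd1 hd2 (-t) (neg_ne_zero.2 hξ)
    rw [← integral_neg_eq_self] at this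
    simp only [hneg]
    convert this using 4 with x
    · congr 2 <;> ring_nf
    · push_cast; ring_nf
    · push_cast; ring_nf
  have : ∀ x : ℝ, (f x : ℂ) * Complex.exp (-(Complex.I * ξ * x)) =
      bp * (((posPow (t - x) d - posPow (-x) d : ℝ) : ℂ) * Complex.exp (-(Complex.I * ξ * x)))
      + bm * (((negPow (t - x) d - negPow (-x) d : ℝ) : ℂ) * Complex.exp (-(Complex.I * ξ * x))) := by
    intro x; rw [hf]; push_cast; ring
  simp_rw [this]
  rw [integral_add ((hbd _ hI1).const_mul _) ((hbd _ hI2).const_mul _), integral_const_mul,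
    integral_const_mul, e1, e2, cpow_val d hξ, cpow_val d (neg_ne_zero.2 hξ), abs_neg, Real.sign_neg]
  push_cast
  rw [show (Real.pi : ℂ) * Complex.I / 2 * -(Real.sign ξ : ℂ) * (d + 1) = -((Real.pi : ℂ) * Complex.I / 2 * (Real.sign ξ : ℂ) * (d + 1)) by ring]
  ring
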